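/- Under the directed noisy network model, suppose n_1/n → κ ∈ (0,1) as n → ∞. Then there exists a strictly positive variance σ_d² such that √(n_1 n_2)·[(β̂_{12} − β̂_{21}) − (β_{12} − β_{21})] converges in distribution to the Gaussian N(0, σ_d²) as n → ∞. -/

import Mathlib

/-!
STATEMENT 18: Under the directed noisy network model with n₁/n → κ ∈ (0,1),
there is a strictly positive variance σ_d² such that
√(n₁ n₂)·[(β̂₁₂ − β̂₂₁) − (β₁₂ − β₂₁)] converges in distribution to N(0, σ_d²).
Convergence in distribution is expressed via pointwise convergence of CDFs
(the Gaussian CDF being continuous).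
-/

open MeasureTheory ProbabilityTheory Filter Finset

noncomputable section

/-- Conditional mass of an adjacency configuration given labels:
independent Bernoulli edges with success probability `B (l i) (l j)`, i < j. -/
def edgeMass {n : ℕ} (B : Bool → Bool → ℝ) (l : Fin n → Bool)
    (a : Fin n → Fin n → Bool) : ℝ :=
  ∏ p ∈ Finset.univ.filter (fun p : Fin n × Fin n => p.1 < p.2),
    (if a p.1 p.2 then B (l p.1) (l p.2) else 1 - B (l p.1) (l p.2))

/-- The symmetric 2×2 connectivity matrix with within-group probabilities
`p₁₁` (group 1 = `true`), `p₂₂` (group 2 = `false`) and between-group `p₁₂`. -/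
def sbmB (p₁₁ p₂₂ p₁₂ : ℝ) : Bool → Bool → ℝ :=
  fun x y => if x then (if y then p₁₁ else p₁₂) else (if y then p₁₂ else p₂₂)

/-- The 2×2 matrix of directed recall-error rates: `βm x y` is the probability
that a node with label `x` fails to report an existing edge to a node with
label `y` (`true` = group 1, `false` = group 2). -/
def dirBeta (β₁₁ β₁₂ β₂₁ β₂₂ : ℝ) : Bool → Bool → ℝ :=
  fun x y => if x then (if y then β₁₁ else β₁₂) else (if y then β₂₁ else β₂₂)

/-- Conditional mass of the observed directed network `y` given the undirected
construct network `a` and the labels: independently over ordered pairs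
`(i, j)`, `i ≠ j`, an existing edge is reported with probability
`1 − βm (l i) (l j)`, and no edges are added. -/
def dirObsMass {n : ℕ} (βm : Bool → Bool → ℝ) (l : Fin n → Bool)
    (a y : Fin n → Fin n → Bool) : ℝ :=
  ∏ p ∈ Finset.univ.filter (fun p : Fin n × Fin n => p.1 ≠ p.2),
    (if a p.1 p.2 then
      (if y p.1 p.2 then 1 - βm (l p.1) (l p.2) else βm (l p.1) (l p.2))
     else (if y p.1 p.2 then 0 else 1))

/-- `(P, A, Y)` is a directed noisy network model: the undirected construct
network `A` is a 2-group SBM conditional on the deterministic label vector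
`l`, and `Y` is a directed observation of `A` with group-dependent directed
recall errors `βm`.  The joint law is specified by its probability mass
function. -/
structure IsDirObsSBM {Ω : Type*} [MeasurableSpace Ω] (P : Measure Ω) (n : ℕ)
    (B βm : Bool → Bool → ℝ) (l : Fin n → Bool)
    (A Y : Ω → Fin n → Fin n → Bool) : Prop where
  isProb : IsProbabilityMeasure P
  symmA : ∀ ω i j, A ω i j = A ω j i
  looplessA : ∀ ω i, A ω i i = false
  looplessY : ∀ ω i, Y ω i i = false
  law : ∀ (a y : Fin n → Fin n → Bool),
    (∀ i j, a i j = a j i) → (∀ i, a i i = false) → (∀ i, y i i = false) →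
    P {ω | A ω = a ∧ Y ω = y}
      = ENNReal.ofReal (edgeMass B l a * dirObsMass βm l a y)

/-- Number of nodes in group 1 (label `true`). -/
def n₁ {n : ℕ} (l : Fin n → Bool) : ℕ :=
  (Finset.univ.filter (fun i => l i = true)).card

/-- Number of nodes in group 2 (label `false`). -/
def n₂ {n : ℕ} (l : Fin n → Bool) : ℕ :=
  (Finset.univ.filter (fun i => l i = false)).card

/-- Number of ordered pairs (i ∈ group 1, j ∈ group 2) selected by `f`. -/
def crossCard {n : ℕ} (l : Fin n → Bool) (f : Fin n → Fin n → Bool) : ℝ :=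
  ((Finset.univ.filter (fun p : Fin n × Fin n =>
      l p.1 = true ∧ l p.2 = false ∧ f p.1 p.2 = true)).card : ℝ)

/-- `û₁₂,d`: observed density of reported ties from group 1 to group 2. -/
def u12d {n : ℕ} (l : Fin n → Bool) (y : Fin n → Fin n → Bool) : ℝ :=
  crossCard l y / ((n₁ l : ℝ) * (n₂ l : ℝ))

/-- `û₂₁,d`: observed density of reported ties from group 2 to group 1. -/
def u21d {n : ℕ} (l : Fin n → Bool) (y : Fin n → Fin n → Bool) : ℝ :=
  crossCard l (fun i j => y j i) / ((n₁ l : ℝ) * (n₂ l : ℝ))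

/-- `û₁₂,a`: asymmetry rate between the groups. -/
def u12a {n : ℕ} (l : Fin n → Bool) (y : Fin n → Fin n → Bool) : ℝ :=
  crossCard l (fun i j => y i j != y j i) / ((n₁ l : ℝ) * (n₂ l : ℝ))

/-- The estimator `β̂₁₂ = (û₂₁,d − û₁₂,d + û₁₂,a)/(2 û₂₁,d)`. -/
def betaHat12 {n : ℕ} (l : Fin n → Bool) (y : Fin n → Fin n → Bool) : ℝ :=
  (u21d l y - u12d l y + u12a l y) / (2 * u21d l y)

/-- The estimator `β̂₂₁ = (û₁₂,d − û₂₁,d + û₁₂,a)/(2 û₁₂,d)`. -/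
def betaHat21 {n : ℕ} (l : Fin n → Bool) (y : Fin n → Fin n → Bool) : ℝ :=
  (u12d l y - u21d l y + u12a l y) / (2 * u12d l y)



abbrev ZZ := Bool × Bool × Bool

/-- joint mass of (a, y1, y2) for one dyad -/
def gm (p b c : ℝ) (z : ZZ) : ℝ :=
  (if z.1 then p else 1 - p) *
  ((if z.1 then (if z.2.1 then 1 - b else b) else (if z.2.1 then 0 else 1)) *
   (if z.1 then (if z.2.2 then 1 - c else c) else (if z.2.2 then 0 else 1)))

def nuM (p b c : ℝ) : Measure ZZ := ∑ z, ENNReal.ofReal (gm p b c z) • Measure.dirac z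

lemma gm_nonneg {p b c : ℝ} (hp : p ∈ Set.Ioo (0:ℝ) 1) (hb : b ∈ Set.Ioo (0:ℝ) 1)
    (hc : c ∈ Set.Ioo (0:ℝ) 1) (z : ZZ) : 0 ≤ gm p b c z := by
  obtain ⟨hp0, hp1⟩ := hp
  obtain ⟨hb0, hb1⟩ := hb
  obtain ⟨hc0, hc1⟩ := hc
  unfold gm
  refine mul_nonneg ?_ (mul_nonneg ?_ ?_) <;> split_ifs <;> linarith

lemma sum_ZZ {M : Type*} [AddCommMonoid M] (f : ZZ → M) : ∑ z, f z =
    f (true,true,true) + f (true,true,false) + (f (true,false,true) + f (true,false,false))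
    + (f (false,true,true) + f (false,true,false) + (f (false,false,true) + f (false,false,false))) := by
  simp [Fintype.sum_prod_type]

lemma gm_sum (p b c : ℝ) : ∑ z, gm p b c z = 1 := by
  rw [sum_ZZ]; simp [gm]; ring

lemma nuM_prob {p b c : ℝ} (hp : p ∈ Set.Ioo (0:ℝ) 1) (hb : b ∈ Set.Ioo (0:ℝ) 1)
    (hc : c ∈ Set.Ioo (0:ℝ) 1) : IsProbabilityMeasure (nuM p b c) := by
  constructor
  simp only [nuM, Measure.coe_finsetSum, Finset.sum_apply, Measure.smul_apply, measure_univ,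
    smul_eq_mul, mul_one]
  rw [← ENNReal.ofReal_sum_of_nonneg (fun z _ => gm_nonneg hp hb hc z), gm_sum, ENNReal.ofReal_one]

lemma nuM_singleton (p b c : ℝ) (z : ZZ) : nuM p b c {z} = ENNReal.ofReal (gm p b c z) := by
  simp only [nuM, Measure.coe_finsetSum, Finset.sum_apply, Measure.smul_apply, smul_eq_mul]
  rw [Finset.sum_eq_single z]
  · simp
  · intro w _ hw
    simp [hw]
  · simp

lemma nuM_integral {p b c : ℝ} (hp : p ∈ Set.Ioo (0:ℝ) 1) (hb : b ∈ Set.Ioo (0:ℝ) 1)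
    (hc : c ∈ Set.Ioo (0:ℝ) 1) (f : ZZ → ℝ) : ∫ z, f z ∂(nuM p b c) = ∑ z, gm p b c z * f z := by
  have := nuM_prob hp hb hc
  rw [integral_fintype Integrable.of_finite]
  refine Finset.sum_congr rfl fun z _ => ?_
  rw [Measure.real, nuM_singleton, ENNReal.toReal_ofReal (gm_nonneg hp hb hc z), smul_eq_mul]

section limit

set_option linter.unusedSectionVars false

variable {Ω : Type*} [MeasurableSpace Ω] {μ : Measure Ω} [IsProbabilityMeasure μ]
  {X : ℕ → Ω → ZZ} {p b c : ℝ}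

lemma mean_eq (hp : p ∈ Set.Ioo (0:ℝ) 1) (hb : b ∈ Set.Ioo (0:ℝ) 1) (hc : c ∈ Set.Ioo (0:ℝ) 1)
    (hm : ∀ i, Measurable (X i)) (hlaw : ∀ i, μ.map (X i) = nuM p b c) (f : ZZ → ℝ) (i : ℕ) :
    ∫ ω, f (X i ω) ∂μ = ∑ z, gm p b c z * f z := by
  rw [← nuM_integral hp hb hc, ← hlaw i, integral_map (hm i).aemeasurable]
  exact (measurable_of_finite f).aestronglyMeasurable

lemma ident_f (hm : ∀ i, Measurable (X i)) (hlaw : ∀ i, μ.map (X i) = nuM p b c) (f : ZZ → ℝ)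
    (i : ℕ) : IdentDistrib (fun ω => f (X i ω)) (fun ω => f (X 0 ω)) μ μ := by
  have : IdentDistrib (X i) (X 0) μ μ :=
    ⟨(hm i).aemeasurable, (hm 0).aemeasurable, by rw [hlaw, hlaw]⟩
  exact this.comp (measurable_of_finite f)

lemma bdd_f (hm : ∀ i, Measurable (X i)) (f : ZZ → ℝ) (q : ENNReal) :
    MemLp (fun ω => f (X 0 ω)) q μ := by
  refine MemLp.of_bound (C := ∑ z, ‖f z‖)
    ((measurable_of_finite f).comp (hm 0)).aestronglyMeasurable ?_
  refine ae_of_all _ fun ω => ?_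
  exact Finset.single_le_sum (f := fun z => ‖f z‖) (fun _ _ => norm_nonneg _) (Finset.mem_univ _)

lemma slln (hp : p ∈ Set.Ioo (0:ℝ) 1) (hb : b ∈ Set.Ioo (0:ℝ) 1) (hc : c ∈ Set.Ioo (0:ℝ) 1)
    (hm : ∀ i, Measurable (X i)) (hind : iIndepFun X μ)
    (hlaw : ∀ i, μ.map (X i) = nuM p b c) (f : ZZ → ℝ) :
    ∀ᵐ ω ∂μ, Tendsto (fun M : ℕ => (∑ k ∈ Finset.range M, f (X k ω)) / M) atTop
      (nhds (∑ z, gm p b c z * f z)) := by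
  have h := strong_law_ae_real (μ := μ) (fun k ω => f (X k ω))
    (memLp_one_iff_integrable.1 (bdd_f hm f 1))
    (fun i j hij => ((hind.comp (fun _ => f) (fun _ => measurable_of_finite f)).indepFun hij))
    (ident_f hm hlaw f)
  rw [mean_eq hp hb hc hm hlaw] at h
  exact h

lemma clt_f (hp : p ∈ Set.Ioo (0:ℝ) 1) (hb : b ∈ Set.Ioo (0:ℝ) 1) (hc : c ∈ Set.Ioo (0:ℝ) 1)
    (hm : ∀ i, Measurable (X i)) (hind : iIndepFun X μ)
    (hlaw : ∀ i, μ.map (X i) = nuM p b c) (f : ZZ → ℝ) (h0 : ∑ z, gm p b c z * f z = 0) :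
    TendstoInDistribution (fun (M : ℕ) ω => (√M)⁻¹ * ∑ k ∈ Finset.range M, f (X k ω)) atTop
      id (fun _ => μ) (gaussianReal 0 (∑ z, gm p b c z * f z ^ 2).toNNReal) := by
  have hv : Var[(fun ω => f (X 0 ω)); μ] = ∑ z, gm p b c z * f z ^ 2 := by
    rw [variance_of_integral_eq_zero (X := fun ω => f (X 0 ω)) (μ := μ)
      ((measurable_of_finite f).comp (hm 0)).aemeasurable
      (by rw [mean_eq hp hb hc hm hlaw, h0])]
    exact mean_eq hp hb hc hm hlaw (fun z => f z ^ 2) 0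
  have h := tendstoInDistribution_inv_sqrt_mul_sum_sub (P := μ)
    (P' := gaussianReal 0 (∑ z, gm p b c z * f z ^ 2).toNNReal) (Y := id)
    (X := fun k ω => f (X k ω)) ⟨by fun_prop, by rw [Measure.map_id, hv]⟩
    (bdd_f hm f 2)
    (hind.comp (fun _ => f) (fun _ => measurable_of_finite f)) (ident_f hm hlaw f)
  rw [mean_eq hp hb hc hm hlaw, h0] at h
  simpa using h

lemma sum_meas (hm : ∀ i, Measurable (X i)) (f : ZZ → ℝ) (M : ℕ) :
    Measurable (fun ω => ∑ k ∈ Finset.range M, f (X k ω)) :=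
  Finset.measurable_fun_sum _ fun k _ => (measurable_of_finite f).comp (hm k)

lemma toMeasure_of_dist_zero {R : ℕ → Ω → ℝ} {Ω' : Type*} [MeasurableSpace Ω'] {μ' : Measure Ω'}
    [IsProbabilityMeasure μ']
    (h : TendstoInDistribution R atTop (fun _ => (0:ℝ)) (fun _ => μ) μ') :
    TendstoInMeasure μ R atTop (fun _ => 0) := by
  rw [tendstoInMeasure_iff_norm]
  intro ε hε
  have hcl : IsClosed {x : ℝ | ε ≤ ‖x - 0‖} := isClosed_le continuous_const (by fun_prop)
  have h2 := ProbabilityMeasure.tendsto_measure_of_null_frontier_of_tendsto' h.tendsto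
    (E := {x : ℝ | ε ≤ ‖x - 0‖}) (by
      have h1 : (frontier {x : ℝ | ε ≤ ‖x - 0‖}) ⊆ {x : ℝ | ε ≤ ‖x - 0‖} := hcl.frontier_subset
      refine measure_mono_null h1 ?_
      simp [Measure.map_const, hε])
  have h3 : (μ'.map (fun _ : Ω' => (0:ℝ))) {x : ℝ | ε ≤ ‖x - 0‖} = 0 := by
    simp [Measure.map_const, hε]
  simp only [ProbabilityMeasure.coe_mk] at h2
  rw [h3] at h2
  refine h2.congr fun n => ?_
  rw [Measure.map_apply_of_aemeasurable (h.forall_aemeasurable n) hcl.measurableSet]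
  rfl

lemma rem_f (hp : p ∈ Set.Ioo (0:ℝ) 1) (hb : b ∈ Set.Ioo (0:ℝ) 1) (hc : c ∈ Set.Ioo (0:ℝ) 1)
    (hm : ∀ i, Measurable (X i)) (hind : iIndepFun X μ)
    (hlaw : ∀ i, μ.map (X i) = nuM p b c) (f : ZZ → ℝ) (h0 : ∑ z, gm p b c z * f z = 0)
    (R : ℕ → Ω → ℝ) (hR : ∀ n, Measurable (R n))
    (hR0 : ∀ᵐ ω ∂μ, Tendsto (fun n => R n ω) atTop (nhds 0)) :
    TendstoInMeasure μ (fun (M : ℕ) ω => ((√M)⁻¹ * ∑ k ∈ Finset.range M, f (X k ω)) * R M ω)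
      atTop (fun _ => 0) := by
  have h1 := clt_f hp hb hc hm hind hlaw f h0
  have h2 : TendstoInMeasure μ R atTop (fun _ => (0:ℝ)) :=
    tendstoInMeasure_of_tendsto_ae (fun n => (hR n).aestronglyMeasurable) hR0
  have h3 := h1.continuous_comp_prodMk_of_tendstoInMeasure_const
    (g := fun q : ℝ × ℝ => q.1 * q.2) (by fun_prop) h2 (fun n => (hR n).aemeasurable)
  simp only [id, mul_zero] at h3
  exact toMeasure_of_dist_zero h3

def f1 (z : ZZ) : ℝ := if z.2.1 then 1 else 0
def f2 (z : ZZ) : ℝ := if z.2.2 then 1 else 0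
def fa (z : ZZ) : ℝ := if z.2.1 != z.2.2 then 1 else 0

def fs (d : ℝ) (m s1 s2 sa : ℝ) : ℝ :=
  √m * (((s2 / m - s1 / m + sa / m) / (2 * (s2 / m)) - (s1 / m - s2 / m + sa / m) / (2 * (s1 / m))) - d)

def fU (b : ℝ) (z : ZZ) : ℝ := (f2 z - f1 z + fa z) / 2 - b * f2 z
def fV (c : ℝ) (z : ZZ) : ℝ := (f1 z - f2 z + fa z) / 2 - c * f1 z
def fW (p b c : ℝ) (z : ZZ) : ℝ := fU b z / (p * (1 - c)) - fV c z / (p * (1 - b))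

lemma limit_thm (hp : p ∈ Set.Ioo (0:ℝ) 1) (hb : b ∈ Set.Ioo (0:ℝ) 1) (hc : c ∈ Set.Ioo (0:ℝ) 1)
    (hm : ∀ i, Measurable (X i)) (hind : iIndepFun X μ)
    (hlaw : ∀ i, μ.map (X i) = nuM p b c) :
    ∃ v : ℝ, 0 < v ∧ ∀ x : ℝ, Tendsto (fun M : ℕ =>
      μ {ω | fs (b - c) M (∑ k ∈ Finset.range M, f1 (X k ω)) (∑ k ∈ Finset.range M, f2 (X k ω))
        (∑ k ∈ Finset.range M, fa (X k ω)) ≤ x}) atTop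
        (nhds (gaussianReal 0 (Real.toNNReal v) (Set.Iic x))) := by
  have hb1 : 0 < 1 - b := by linarith [hb.2]
  have hc1 : 0 < 1 - c := by linarith [hc.2]
  have hp0 := hp.1
  have hU : ∑ z, gm p b c z * fU b z = 0 := by
    rw [sum_ZZ]; simp [gm, fU, f1, f2, fa]; ring
  have hV : ∑ z, gm p b c z * fV c z = 0 := by
    rw [sum_ZZ]; simp [gm, fV, f1, f2, fa]; ring
  have hW : ∑ z, gm p b c z * fW p b c z = 0 := by
    have : ∑ z, gm p b c z * fW p b c z = (∑ z, gm p b c z * fU b z) / (p * (1 - c))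
        - (∑ z, gm p b c z * fV c z) / (p * (1 - b)) := by
      rw [Finset.sum_div, Finset.sum_div, ← Finset.sum_sub_distrib]
      refine Finset.sum_congr rfl fun z _ => ?_
      rw [fW]; ring
    rw [this, hU, hV]; simp
  have hm1 : ∑ z, gm p b c z * f1 z = p * (1 - b) := by
    rw [sum_ZZ]; simp [gm, f1]; ring
  have hm2 : ∑ z, gm p b c z * f2 z = p * (1 - c) := by
    rw [sum_ZZ]; simp [gm, f2]; ring
  have hv : 0 < ∑ z, gm p b c z * fW p b c z ^ 2 := by
    refine Finset.sum_pos' (fun z _ => mul_nonneg (gm_nonneg hp hb hc z) (sq_nonneg _))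
      ⟨(true, false, true), Finset.mem_univ _, ?_⟩
    have h1 : gm p b c (true, false, true) = p * (b * (1 - c)) := by simp [gm]
    have h2 : fW p b c (true, false, true) = (1 - b) / (p * (1 - c)) := by
      simp [fW, fU, fV, f1, f2, fa]
    rw [h1, h2]
    have := hb.1
    positivity
  refine ⟨_, hv, fun x => ?_⟩
  set v := ∑ z, gm p b c z * fW p b c z ^ 2 with hvdef
  have hs1 := slln hp hb hc hm hind hlaw f1
  have hs2 := slln hp hb hc hm hind hlaw f2
  rw [hm1] at hs1
  rw [hm2] at hs2
  have ha1 : p * (1 - b) ≠ 0 := by positivity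
  have ha2 : p * (1 - c) ≠ 0 := by positivity
  set D1 : ℕ → Ω → ℝ := fun M ω => (∑ k ∈ Finset.range M, f1 (X k ω)) / M with hD1
  set D2 : ℕ → Ω → ℝ := fun M ω => (∑ k ∈ Finset.range M, f2 (X k ω)) / M with hD2
  have mD1 : ∀ M, Measurable (D1 M) := fun M => (sum_meas hm f1 M).div_const _
  have mD2 : ∀ M, Measurable (D2 M) := fun M => (sum_meas hm f2 M).div_const _
  have hR1 := rem_f hp hb hc hm hind hlaw (fU b) hU
    (fun M ω => (D2 M ω)⁻¹ - (p * (1 - c))⁻¹) (fun M => (mD2 M).inv.sub_const _) (by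
      filter_upwards [hs2] with ω hω
      rw [← sub_self (p * (1 - c))⁻¹]
      exact (hω.inv₀ ha2).sub_const (p * (1 - c))⁻¹)
  have hR2 := rem_f hp hb hc hm hind hlaw (fV c) hV
    (fun M ω => -((D1 M ω)⁻¹ - (p * (1 - b))⁻¹)) (fun M => ((mD1 M).inv.sub_const _).neg) (by
      filter_upwards [hs1] with ω hω
      rw [← neg_zero, ← sub_self (p * (1 - b))⁻¹]
      exact ((hω.inv₀ ha1).sub_const (p * (1 - b))⁻¹).neg)
  set St : ℕ → Ω → ℝ := fun M ω =>
    fs (b - c) M (∑ k ∈ Finset.range M, f1 (X k ω)) (∑ k ∈ Finset.range M, f2 (X k ω))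
        (∑ k ∈ Finset.range M, fa (X k ω)) with hSt
  have mSt : ∀ M, Measurable (St M) := by
    intro M
    have e1 := sum_meas hm f1 M
    have e2 := sum_meas hm f2 M
    have e3 := sum_meas hm fa M
    simp only [hSt, fs]
    fun_prop
  set SU : ℕ → Ω → ℝ := fun M ω => (√M)⁻¹ * ∑ k ∈ Finset.range M, fU b (X k ω) with hSU
  set SV : ℕ → Ω → ℝ := fun M ω => (√M)⁻¹ * ∑ k ∈ Finset.range M, fV c (X k ω) with hSV
  have mSU : ∀ M, Measurable (SU M) := fun M => (sum_meas hm _ M).const_mul _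
  have mSV : ∀ M, Measurable (SV M) := fun M => (sum_meas hm _ M).const_mul _
  -- third remainder
  have hR3 : TendstoInMeasure μ (fun (M : ℕ) ω => St M ω - (SU M ω * (D2 M ω)⁻¹ - SV M ω * (D1 M ω)⁻¹))
      atTop (fun _ => (0:ℝ)) := by
    refine tendstoInMeasure_of_tendsto_ae (fun n => ?_) ?_
    · exact ((mSt n).sub (((mSU n).mul (mD2 n).inv).sub
        ((mSV n).mul (mD1 n).inv))).aestronglyMeasurable
    filter_upwards [hs1, hs2] with ω h1 h2
    refine tendsto_const_nhds.congr' ?_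
    filter_upwards [h1.eventually_ne ha1, h2.eventually_ne ha2, eventually_gt_atTop 0]
      with M e1 e2 hM
    have hM' : (0:ℝ) < M := by exact_mod_cast hM
    have hMM : (√(M:ℝ)) ^ 2 = M := Real.sq_sqrt hM'.le
    have hsM : √(M:ℝ) ≠ 0 := by positivity
    have eU : ∑ k ∈ Finset.range M, fU b (X k ω) = ((∑ k ∈ Finset.range M, f2 (X k ω)) -
        (∑ k ∈ Finset.range M, f1 (X k ω)) + ∑ k ∈ Finset.range M, fa (X k ω)) / 2
        - b * ∑ k ∈ Finset.range M, f2 (X k ω) := by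
      simp only [fU, Finset.sum_sub_distrib, ← Finset.sum_div, Finset.sum_add_distrib,
        ← Finset.mul_sum]
    have eV : ∑ k ∈ Finset.range M, fV c (X k ω) = ((∑ k ∈ Finset.range M, f1 (X k ω)) -
        (∑ k ∈ Finset.range M, f2 (X k ω)) + ∑ k ∈ Finset.range M, fa (X k ω)) / 2
        - c * ∑ k ∈ Finset.range M, f1 (X k ω) := by
      simp only [fV, Finset.sum_sub_distrib, ← Finset.sum_div, Finset.sum_add_distrib,
        ← Finset.mul_sum]
    simp only [hSt, hSU, hSV, hD1, hD2, fs, eU, eV] at e1 e2 ⊢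
    generalize (∑ k ∈ Finset.range M, f1 (X k ω)) = s1 at *
    generalize (∑ k ∈ Finset.range M, f2 (X k ω)) = s2 at *
    generalize (∑ k ∈ Finset.range M, fa (X k ω)) = sa at *
    have e1' : s1 ≠ 0 := fun h => e1 (by simp [h])
    have e2' : s2 ≠ 0 := fun h => e2 (by simp [h])
    generalize √(M:ℝ) = r at *
    rw [← hMM]
    field_simp
    ring
  have h1 := clt_f hp hb hc hm hind hlaw (fW p b c) hW
  have h2 := ((h1.add_of_tendstoInMeasure_const hR1 (fun M =>
      ((mSU M).mul ((mD2 M).inv.sub_const _)).aemeasurable)).add_of_tendstoInMeasure_const hR2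
      (fun M => ((mSV M).mul ((mD1 M).inv.sub_const _).neg).aemeasurable)).add_of_tendstoInMeasure_const
      hR3 (fun M => ((mSt M).sub (((mSU M).mul (mD2 M).inv).sub
        ((mSV M).mul (mD1 M).inv))).aemeasurable)
  have h3 : TendstoInDistribution St atTop id (fun _ => μ) (gaussianReal 0 v.toNNReal) := by
    refine TendstoInDistribution.congr (fun M => ?_) ?_ h2
    · refine ae_of_all _ fun ω => ?_
      have eW : ∑ k ∈ Finset.range M, fW p b c (X k ω) =
          (∑ k ∈ Finset.range M, fU b (X k ω)) / (p * (1 - c))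
          - (∑ k ∈ Finset.range M, fV c (X k ω)) / (p * (1 - b)) := by
        simp only [fW, Finset.sum_sub_distrib, Finset.sum_div]
      simp only [Pi.add_apply, eW, hSU, hSV]
      ring
    · refine ae_of_all _ fun ω => ?_
      simp
  have hvne : v.toNNReal ≠ 0 := by simpa using hv
  have h4 := ProbabilityMeasure.tendsto_measure_of_null_frontier_of_tendsto' h3.tendsto
    (E := Set.Iic x) (by
      have := nullSingletonClass_gaussianReal (μ := 0) hvne
      simp)
  simp only [ProbabilityMeasure.coe_mk, Measure.map_id] at h4
  refine h4.congr fun M => ?_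
  rw [Measure.map_apply (mSt M) measurableSet_Iic]
  rfl

end limit

section transport

lemma transport_generic {Ω W : Type*} [MeasurableSpace Ω] [Fintype W] [MeasurableSpace W]
    [MeasurableSingletonClass W] (P : Measure Ω) [IsProbabilityMeasure P] (m : Measure W)
    [IsProbabilityMeasure m] (ξ : Ω → W) (h : ∀ w, P {ω | ξ ω = w} = m {w}) (S : Set W) :
    P {ω | ξ ω ∈ S} = m S := by
  classical
  have key : ∀ S : Set W, P {ω | ξ ω ∈ S} ≤ m S := by
    intro S
    have h1 : {ω | ξ ω ∈ S} ⊆ ⋃ w ∈ S.toFinset, {ω | ξ ω = w} := by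
      intro ω hω
      simpa using hω
    refine (measure_mono h1).trans ((measure_biUnion_finset_le _ _).trans ?_)
    simp only [h]
    rw [sum_measure_singleton, Set.coe_toFinset]
  refine le_antisymm (key S) ?_
  have hS : MeasurableSet S := S.toFinite.measurableSet
  have h1 : (1 : ENNReal) ≤ P {ω | ξ ω ∈ S} + m Sᶜ := by
    calc (1 : ENNReal) = P Set.univ := measure_univ.symm
      _ ≤ P ({ω | ξ ω ∈ S} ∪ {ω | ξ ω ∈ Sᶜ}) := by
          refine measure_mono fun ω _ => ?_
          by_cases hh : ξ ω ∈ S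
          · exact Or.inl hh
          · exact Or.inr hh
      _ ≤ _ := (measure_union_le _ _).trans (by gcongr; exact key _)
  rw [← prob_add_prob_compl (μ := m) hS] at h1
  exact (ENNReal.add_le_add_iff_right (measure_ne_top m _)).1 h1

lemma map_pi_of_indep {Ω Z ι : Type*} [MeasurableSpace Ω] [MeasurableSpace Z] [Fintype ι]
    {μ : Measure Ω} [IsProbabilityMeasure μ] {X : ι → Ω → Z} (hm : ∀ i, Measurable (X i))
    (hind : iIndepFun X μ) {Q : Measure Z} (hlaw : ∀ i, μ.map (X i) = Q) :
    μ.map (fun ω i => X i ω) = Measure.pi (fun _ => Q) := by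
  rw [(iIndepFun_iff_map_fun_eq_pi_map (fun i => (hm i).aemeasurable)).1 hind]
  simp [hlaw]

variable {n : ℕ}

abbrev Edg (n : ℕ) := {q : Fin n × Fin n // q.1 < q.2}

def so (l : Fin n → Bool) (e : Edg n) : Fin n := if l e.1.1 then e.1.1 else e.1.2
def ta (l : Fin n → Bool) (e : Edg n) : Fin n := if l e.1.1 then e.1.2 else e.1.1

def enc (l : Fin n → Bool) (a y : Fin n → Fin n → Bool) (e : Edg n) : ZZ :=
  (a e.1.1 e.1.2, y (so l e) (ta l e), y (ta l e) (so l e))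

lemma enc_inj (l : Fin n → Bool) {a y a' y' : Fin n → Fin n → Bool}
    (ha : ∀ i j, a i j = a j i) (ha' : ∀ i j, a' i j = a' j i)
    (hl : ∀ i, a i i = false) (hl' : ∀ i, a' i i = false)
    (hy : ∀ i, y i i = false) (hy' : ∀ i, y' i i = false)
    (h : enc l a y = enc l a' y') : a = a' ∧ y = y' := by
  have h1 : ∀ i j, i < j → a i j = a' i j ∧ y i j = y' i j ∧ y j i = y' j i := by
    intro i j hij
    have := congrFun h ⟨(i, j), hij⟩
    simp only [enc, so, ta, Prod.mk.injEq] at this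
    by_cases hh : l i = true
    · simp only [hh, if_true] at this
      exact this
    · simp only [hh] at this
      exact ⟨this.1, this.2.2, this.2.1⟩
  constructor
  · funext i j
    rcases lt_trichotomy i j with hij | hij | hij
    · exact (h1 i j hij).1
    · subst hij; rw [hl, hl']
    · rw [ha, ha' i j]; exact (h1 j i hij).1
  · funext i j
    rcases lt_trichotomy i j with hij | hij | hij
    · exact (h1 i j hij).2.1
    · subst hij; rw [hy, hy']
    · exact (h1 j i hij).2.2

def decA (w : Edg n → ZZ) (i j : Fin n) : Bool :=
  if h : i < j then (w ⟨(i, j), h⟩).1 else if h : j < i then (w ⟨(j, i), h⟩).1 else false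

def decY (l : Fin n → Bool) (w : Edg n → ZZ) (i j : Fin n) : Bool :=
  if h : i < j then (if l i then (w ⟨(i, j), h⟩).2.1 else (w ⟨(i, j), h⟩).2.2)
  else if h : j < i then (if l j then (w ⟨(j, i), h⟩).2.2 else (w ⟨(j, i), h⟩).2.1) else false

lemma decA_symm (w : Edg n → ZZ) (i j : Fin n) : decA w i j = decA w j i := by
  unfold decA
  rcases lt_trichotomy i j with hij | hij | hij
  · simp [hij, hij.not_gt]
  · subst hij; rfl
  · simp [hij, hij.not_gt]

lemma enc_dec (l : Fin n → Bool) (w : Edg n → ZZ) : enc l (decA w) (decY l w) = w := by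
  funext ⟨⟨i, j⟩, hij⟩
  have hij' : i < j := hij
  by_cases hh : l i = true
  · simp [enc, so, ta, decA, decY, hh, hij', hij'.not_gt]
  · simp [enc, so, ta, decA, decY, hh, hij', hij'.not_gt]

lemma mass_eq (B βm : Bool → Bool → ℝ) (l : Fin n → Bool) (a y : Fin n → Fin n → Bool)
    (ha : ∀ i j, a i j = a j i) :
    edgeMass B l a * dirObsMass βm l a y =
      ∏ e : Edg n, gm (B (l e.1.1) (l e.1.2)) (βm (l (so l e)) (l (ta l e)))
        (βm (l (ta l e)) (l (so l e))) (enc l a y e) := by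
  have h1 : ∀ F : Fin n × Fin n → ℝ,
      ∏ p ∈ Finset.univ.filter (fun p : Fin n × Fin n => p.1 < p.2), F p = ∏ e : Edg n, F e.1 := by
    intro F
    exact Finset.prod_subtype _ (by simp) F
  have h2 : ∀ F : Fin n × Fin n → ℝ,
      ∏ p ∈ Finset.univ.filter (fun p : Fin n × Fin n => p.1 ≠ p.2), F p
        = ∏ e : Edg n, (F e.1 * F e.1.swap) := by
    intro F
    rw [Finset.prod_mul_distrib, ← h1, ← h1 (fun p => F p.swap)]
    have h3 : Finset.univ.filter (fun p : Fin n × Fin n => p.1 ≠ p.2) =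
        Finset.univ.filter (fun p : Fin n × Fin n => p.1 < p.2) ∪
        Finset.univ.filter (fun p : Fin n × Fin n => p.2 < p.1) := by
      ext p
      simp [lt_or_lt_iff_ne]
    rw [h3, Finset.prod_union]
    · congr 1
      refine Finset.prod_nbij' Prod.swap Prod.swap ?_ ?_ ?_ ?_ ?_ <;> simp
    · rw [Finset.disjoint_filter]
      intro p _ h h'
      exact absurd h h'.not_gt
  unfold edgeMass dirObsMass
  rw [h1, h2, ← Finset.prod_mul_distrib]
  refine Finset.prod_congr rfl fun e _ => ?_
  obtain ⟨⟨i, j⟩, hij⟩ := e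
  simp only [Prod.swap, enc, gm, so, ta]
  rw [ha j i]
  by_cases hh : l i = true
  · simp only [hh, if_true]
  · simp only [hh]
    simp only [Bool.false_eq_true, if_false]
    rw [mul_comm (ite (a i j = true) (ite (y i j = true) _ _) _)]
    simp only [hh]

lemma cross_bij {N : Type*} [AddCommMonoid N] (l : Fin n → Bool) (F : Fin n → Fin n → N) :
    ∑ p ∈ Finset.univ.filter (fun p : Fin n × Fin n => l p.1 = true ∧ l p.2 = false), F p.1 p.2 =
      ∑ e : {e : Edg n // l e.1.1 ≠ l e.1.2}, F (so l e.1) (ta l e.1) := by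
  symm
  refine Finset.sum_nbij (fun e => (so l e.1, ta l e.1)) ?_ ?_ ?_ ?_
  · rintro ⟨⟨⟨i, j⟩, hij⟩, he⟩ _
    have he' : l i ≠ l j := he
    cases hi : l i <;> cases hj : l j <;> simp_all [so, ta]
  · rintro ⟨⟨⟨i, j⟩, hij⟩, he⟩ _ ⟨⟨⟨i', j'⟩, hij'⟩, he'⟩ _ h
    have e1 : l i ≠ l j := he
    have e2 : l i' ≠ l j' := he'
    have e3 : i < j := hij
    have e4 : i' < j' := hij'
    simp only [so, ta, Prod.mk.injEq] at h
    obtain ⟨ha, hb⟩ := h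
    simp only [Subtype.mk.injEq, Prod.mk.injEq]
    by_cases hi : l i = true <;> by_cases hi' : l i' = true <;>
      simp only [hi, hi', if_true, Bool.false_eq_true, if_false] at ha hb
    · exact ⟨ha, hb⟩
    · subst ha hb; exact absurd e3 e4.not_gt
    · subst ha hb; exact absurd e3 e4.not_gt
    · exact ⟨hb, ha⟩
  · rintro ⟨i, j⟩ hp
    have hp' : l i = true ∧ l j = false := by simpa using hp
    have hne : i ≠ j := by
      rintro rfl
      rw [hp'.1] at hp'
      simp at hp'
    rcases lt_or_gt_of_ne hne with h | h
    · exact ⟨⟨⟨(i, j), h⟩, by simp [hp'.1, hp'.2]⟩, by simp, by simp [so, ta, hp'.1]⟩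
    · exact ⟨⟨⟨(j, i), h⟩, by simp [hp'.1, hp'.2]⟩, by simp, by simp [so, ta, hp'.2]⟩
  · intro e _
    rfl

lemma crossCard_eq (l : Fin n → Bool) (f : Fin n → Fin n → Bool) :
    crossCard l f = ∑ e : {e : Edg n // l e.1.1 ≠ l e.1.2},
      (if f (so l e.1) (ta l e.1) = true then (1:ℝ) else 0) := by
  rw [← cross_bij l (fun i j => if f i j = true then (1:ℝ) else 0), crossCard,
    ← Finset.sum_filter, Finset.filter_filter, Finset.sum_const, nsmul_eq_mul, mul_one]
  simp only [and_assoc]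

lemma cross_count (l : Fin n → Bool) :
    Fintype.card {e : Edg n // l e.1.1 ≠ l e.1.2} = n₁ l * n₂ l := by
  have h := cross_bij l (fun _ _ => (1:ℕ))
  simp only [Finset.sum_const, smul_eq_mul, mul_one, Finset.card_univ] at h
  rw [← h, n₁, n₂, ← Finset.card_product]
  congr 1
  ext p
  simp

lemma stat_eq (l : Fin n → Bool) (a y : Fin n → Fin n → Bool) (d : ℝ) :
    Real.sqrt ((n₁ l : ℝ) * (n₂ l : ℝ)) * ((betaHat12 l y - betaHat21 l y) - d) =
    fs d ((n₁ l * n₂ l : ℕ) : ℝ)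
      (∑ e : {e : Edg n // l e.1.1 ≠ l e.1.2}, f1 (enc l a y e.1))
      (∑ e : {e : Edg n // l e.1.1 ≠ l e.1.2}, f2 (enc l a y e.1))
      (∑ e : {e : Edg n // l e.1.1 ≠ l e.1.2}, fa (enc l a y e.1)) := by
  simp only [betaHat12, betaHat21, u12d, u21d, u12a, crossCard_eq, fs, f1, f2, fa, enc,
    Nat.cast_mul]
  rfl

lemma prob_eq {Ω : Type*} [MeasurableSpace Ω] (P : Measure Ω)
    {p₁₁ p₂₂ p₁₂ β₁₁ β₁₂ β₂₁ β₂₂ : ℝ}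
    (hp₁₁ : p₁₁ ∈ Set.Ioo (0:ℝ) 1) (hp₂₂ : p₂₂ ∈ Set.Ioo (0:ℝ) 1)
    (hp₁₂ : p₁₂ ∈ Set.Ioo (0:ℝ) 1)
    (hβ₁₁ : β₁₁ ∈ Set.Ioo (0:ℝ) 1) (hβ₁₂ : β₁₂ ∈ Set.Ioo (0:ℝ) 1)
    (hβ₂₁ : β₂₁ ∈ Set.Ioo (0:ℝ) 1) (hβ₂₂ : β₂₂ ∈ Set.Ioo (0:ℝ) 1)
    (l : Fin n → Bool) (A Y : Ω → Fin n → Fin n → Bool)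
    (h : IsDirObsSBM P n (sbmB p₁₁ p₂₂ p₁₂) (dirBeta β₁₁ β₁₂ β₂₁ β₂₂) l A Y)
    {Ω' : Type*} [MeasurableSpace Ω'] {μ : Measure Ω'} [IsProbabilityMeasure μ]
    {X : ℕ → Ω' → ZZ} (hm : ∀ i, Measurable (X i)) (hind : iIndepFun X μ)
    (hlaw : ∀ i, μ.map (X i) = nuM p₁₂ β₁₂ β₂₁) (d x : ℝ) :
    P {ω | Real.sqrt ((n₁ l : ℝ) * (n₂ l : ℝ)) *
        ((betaHat12 l (Y ω) - betaHat21 l (Y ω)) - d) ≤ x} =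
    μ {ω | fs d ((n₁ l * n₂ l : ℕ) : ℝ) (∑ k ∈ Finset.range (n₁ l * n₂ l), f1 (X k ω))
        (∑ k ∈ Finset.range (n₁ l * n₂ l), f2 (X k ω))
        (∑ k ∈ Finset.range (n₁ l * n₂ l), fa (X k ω)) ≤ x} := by
  have := h.isProb
  have hB : ∀ s t, sbmB p₁₁ p₂₂ p₁₂ s t ∈ Set.Ioo (0:ℝ) 1 := by
    intro s t
    unfold sbmB
    split_ifs <;> assumption
  have hβ : ∀ s t, dirBeta β₁₁ β₁₂ β₂₁ β₂₂ s t ∈ Set.Ioo (0:ℝ) 1 := by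
    intro s t
    unfold dirBeta
    split_ifs <;> assumption
  set ν : Edg n → Measure ZZ := fun e =>
    nuM (sbmB p₁₁ p₂₂ p₁₂ (l e.1.1) (l e.1.2))
      (dirBeta β₁₁ β₁₂ β₂₁ β₂₂ (l (so l e)) (l (ta l e)))
      (dirBeta β₁₁ β₁₂ β₂₁ β₂₂ (l (ta l e)) (l (so l e))) with hν
  have hνp : ∀ e, IsProbabilityMeasure (ν e) := fun e => nuM_prob (hB _ _) (hβ _ _) (hβ _ _)
  have hsing : ∀ w, P {ω | enc l (A ω) (Y ω) = w} = Measure.pi ν {w} := by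
    intro w
    have hdl : ∀ i, decA w i i = false := by intro i; simp [decA]
    have hdy : ∀ i, decY l w i i = false := by intro i; simp [decY]
    have e1 : {ω | enc l (A ω) (Y ω) = w} = {ω | A ω = decA w ∧ Y ω = decY l w} := by
      ext ω
      constructor
      · intro hω
        have hω' : enc l (A ω) (Y ω) = w := hω
        exact enc_inj l (h.symmA ω) (decA_symm w) (h.looplessA ω) hdl (h.looplessY ω) hdy
          (by rw [hω', enc_dec])
      · rintro ⟨h1, h2⟩
        change enc l (A ω) (Y ω) = w
        rw [h1, h2, enc_dec]
    rw [e1, h.law _ _ (decA_symm w) hdl hdy, mass_eq _ _ _ _ _ (decA_symm w), enc_dec,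
      Measure.pi_singleton, ENNReal.ofReal_prod_of_nonneg
        (fun e _ => gm_nonneg (hB _ _) (hβ _ _) (hβ _ _) _)]
    refine Finset.prod_congr rfl fun e _ => ?_
    rw [hν, nuM_singleton]
  set M := n₁ l * n₂ l with hM
  -- the target set in the finite product space
  set T : Set (Fin M → ZZ) := {v | fs d (M : ℝ) (∑ k, f1 (v k)) (∑ k, f2 (v k))
    (∑ k, fa (v k)) ≤ x} with hT
  have hTm : MeasurableSet T := T.toFinite.measurableSet
  let ε : Fin M ≃ {e : Edg n // l e.1.1 ≠ l e.1.2} :=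
    (Fintype.equivFinOfCardEq (cross_count l)).symm
  have hX : Measure.pi (fun _ : Fin M => nuM p₁₂ β₁₂ β₂₁) T =
      μ {ω | fs d (M : ℝ) (∑ k ∈ Finset.range M, f1 (X k ω))
        (∑ k ∈ Finset.range M, f2 (X k ω)) (∑ k ∈ Finset.range M, fa (X k ω)) ≤ x} := by
    have hind' : iIndepFun (fun (k : Fin M) => X k) μ := hind.precomp Fin.val_injective
    rw [← map_pi_of_indep (fun k : Fin M => hm k) hind' (fun k => hlaw k),
      Measure.map_apply (measurable_pi_lambda (fun ω (k : Fin M) => X k ω) fun k => hm k) hTm]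
    congr 1
    ext ω
    simp only [hT, Set.mem_preimage, Set.mem_setOf_eq]
    rw [Fin.sum_univ_eq_sum_range (fun k => f1 (X k ω)), Fin.sum_univ_eq_sum_range
      (fun k => f2 (X k ω)), Fin.sum_univ_eq_sum_range (fun k => fa (X k ω))]
  have hE : Measure.pi ν {w | (fun k => w (ε k).1) ∈ T} =
      Measure.pi (fun _ : Fin M => nuM p₁₂ β₁₂ β₂₁) T := by
    have hi : iIndepFun (fun (e : Edg n) (w : Edg n → ZZ) => w e) (Measure.pi ν) :=
      iIndepFun_pi (X := fun _ z => z) (fun _ => aemeasurable_id)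
    have hi' : iIndepFun (fun (k : Fin M) (w : Edg n → ZZ) => w (ε k).1) (Measure.pi ν) :=
      hi.precomp (g := fun k => (ε k).1) (Subtype.val_injective.comp ε.injective)
    have hl' : ∀ k : Fin M, (Measure.pi ν).map (fun w => w (ε k).1) = nuM p₁₂ β₁₂ β₂₁ := by
      intro k
      have h1 := (measurePreserving_eval ν (ε k).1).map_eq
      change Measure.map (fun w : Edg n → ZZ => w (ε k).1) _ = _ at h1
      rw [h1]
      obtain ⟨⟨⟨i, j⟩, hij⟩, he⟩ := ε k
      have he' : l i ≠ l j := he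
      simp only [hν, so, ta]
      cases hi : l i <;> cases hj : l j <;> simp_all [sbmB, dirBeta]
    rw [← map_pi_of_indep (X := fun (k : Fin M) (w : Edg n → ZZ) => w (ε k).1)
        (fun k => measurable_pi_apply (ε k).1) hi' hl',
      Measure.map_apply (measurable_pi_lambda (fun (w : Edg n → ZZ) (k : Fin M) => w (ε k).1)
        fun k => measurable_pi_apply (ε k).1) hTm]
    rfl
  rw [← hX, ← hE, ← transport_generic P (Measure.pi ν) (fun ω => enc l (A ω) (Y ω)) hsing]
  congr 1
  ext ω
  simp only [hT, Set.mem_setOf_eq]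
  rw [stat_eq l (A ω) (Y ω) d, ← ε.sum_comp (fun e => f1 (enc l (A ω) (Y ω) e.1)),
    ← ε.sum_comp (fun e => f2 (enc l (A ω) (Y ω) e.1)),
    ← ε.sum_comp (fun e => fa (enc l (A ω) (Y ω) e.1))]

lemma n_add (l : Fin n → Bool) : n₁ l + n₂ l = n := by
  have h := Finset.card_filter_add_card_filter_not (s := (Finset.univ : Finset (Fin n)))
    (fun i => l i = true)
  simp only [Finset.card_univ, Fintype.card_fin, Bool.not_eq_true] at h
  exact h

lemma M_tendsto {κ : ℝ} (hκ0 : 0 < κ) (hκ1 : κ < 1) (l : ∀ n : ℕ, Fin n → Bool)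
    (hl : Tendsto (fun n : ℕ => (n₁ (l n) : ℝ) / n) atTop (nhds κ)) :
    Tendsto (fun n => n₁ (l n) * n₂ (l n)) atTop atTop := by
  have h1 : Tendsto (fun n : ℕ => (n₁ (l n) : ℝ) / n * n) atTop atTop :=
    hl.pos_mul_atTop hκ0 tendsto_natCast_atTop_atTop
  have h2 : Tendsto (fun n : ℕ => n₁ (l n)) atTop atTop := by
    rw [← tendsto_natCast_atTop_iff (R := ℝ)]
    refine h1.congr' ?_
    filter_upwards [eventually_gt_atTop 0] with n hn
    field_simp
  refine tendsto_atTop_mono' _ ?_ h2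
  filter_upwards [hl.eventually (gt_mem_nhds hκ1), eventually_gt_atTop 0] with n hn hn0
  have h3 : n₂ (l n) ≠ 0 := by
    intro h0
    have h4 := n_add (l n)
    rw [h0, add_zero] at h4
    rw [h4, div_self (by positivity)] at hn
    exact lt_irrefl _ hn
  exact Nat.le_mul_of_pos_right _ (Nat.pos_of_ne_zero h3)

end transport

theorem statement_18
    (κ p₁₁ p₂₂ p₁₂ β₁₁ β₁₂ β₂₁ β₂₂ : ℝ)
    (hκ0 : 0 < κ) (hκ1 : κ < 1)
    (hp₁₁ : p₁₁ ∈ Set.Ioo (0:ℝ) 1) (hp₂₂ : p₂₂ ∈ Set.Ioo (0:ℝ) 1)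
    (hp₁₂ : p₁₂ ∈ Set.Ioo (0:ℝ) 1)
    (hβ₁₁ : β₁₁ ∈ Set.Ioo (0:ℝ) 1) (hβ₁₂ : β₁₂ ∈ Set.Ioo (0:ℝ) 1)
    (hβ₂₁ : β₂₁ ∈ Set.Ioo (0:ℝ) 1) (hβ₂₂ : β₂₂ ∈ Set.Ioo (0:ℝ) 1)
    (l : ∀ n : ℕ, Fin n → Bool)
    (hl : Tendsto (fun n : ℕ => (n₁ (l n) : ℝ) / n) atTop (nhds κ))
    (Ω : ℕ → Type) [mΩ : ∀ n, MeasurableSpace (Ω n)] (P : ∀ n, Measure (Ω n))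
    (A Y : ∀ n, Ω n → Fin n → Fin n → Bool)
    (hmodel : ∀ n, IsDirObsSBM (P n) n
      (sbmB p₁₁ p₂₂ p₁₂) (dirBeta β₁₁ β₁₂ β₂₁ β₂₂) (l n) (A n) (Y n)) :
    ∃ v : ℝ, 0 < v ∧
      ∀ x : ℝ, Tendsto (fun n =>
          (P n {ω | Real.sqrt ((n₁ (l n) : ℝ) * (n₂ (l n) : ℝ)) *
              ((betaHat12 (l n) (Y n ω) - betaHat21 (l n) (Y n ω)) -
                (β₁₂ - β₂₁)) ≤ x}).toReal)
        atTop (nhds ((gaussianReal 0 (Real.toNNReal v) (Set.Iic x)).toReal)) := by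
  have hprob := nuM_prob hp₁₂ hβ₁₂ hβ₂₁
  obtain ⟨Ω', _, μ, X, hm, hlaw, hind, hμ⟩ := exists_iid ℕ (nuM p₁₂ β₁₂ β₂₁)
  obtain ⟨v, hv, hlim⟩ := limit_thm hp₁₂ hβ₁₂ hβ₂₁ hm hind (fun i => (hlaw i).map_eq)
  refine ⟨v, hv, fun x => ?_⟩
  have h1 := (hlim x).comp (M_tendsto hκ0 hκ1 l hl)
  refine (ENNReal.tendsto_toReal (measure_ne_top _ _)).comp (h1.congr fun n => ?_)
  exact (prob_eq (P n) hp₁₁ hp₂₂ hp₁₂ hβ₁₁ hβ₁₂ hβ₂₁ hβ₂₂ (l n) (A n) (Y n) (hmodel n)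
    hm hind (fun i => (hlaw i).map_eq) (β₁₂ - β₂₁) x).symm

end
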